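/- arXiv:2411.08178 — 2 statements merged into one kernel-verified Lean document; each statement's English description precedes it below -/
import Mathlib

section
/- Let h : ℝ^N → ℝ ∪ {+∞} be a proper, lower semicontinuous, convex function, let λ > 0, let D ∈ ℝ^{N×N} be symmetric positive definite, and let U ∈ ℝ^{N×r} be such that W = D − U Uᵀ is symmetric positive definite. Then for every x ∈ ℝ^N there exists a unique γ* ∈ ℝ^r satisfying Uᵀ ( x − prox_{λh}^D ( x + D^{-1} U γ* ) ) + γ* = 0, and moreover prox_{λh}^W(x) = prox_{λh}^D ( x + D^{-1} U γ* ). -/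
open Matrix

/-- `z` is a minimizer over `ℝ^N` of the weighted proximal objective
`u ↦ lam * h u + (1/2) ‖u - x‖_W²`, i.e. `z = prox_{lam h}^W (x)` when the
minimizer is unique. -/
def IsWProx {N : ℕ} (h : (Fin N → ℝ) → EReal) (lam : ℝ)
    (W : Matrix (Fin N) (Fin N) ℝ) (x z : Fin N → ℝ) : Prop :=
  ∀ u : Fin N → ℝ,
    (lam : EReal) * h z + (((1 / 2 : ℝ) * ((z - x) ⬝ᵥ W.mulVec (z - x)) : ℝ) : EReal) ≤
      (lam : EReal) * h u + (((1 / 2 : ℝ) * ((u - x) ⬝ᵥ W.mulVec (u - x)) : ℝ) : EReal)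

/-!
For a symmetric positive semidefinite form `B`, a point `z` minimizes
`h + ½ B(· - p, · - p)` exactly when `B(p - z, ·)` is a subgradient of `h` at `z`.
For `p = x + D⁻¹ U γ` and `γ = -Uᵀ (x - z)`,
`D (p - z) = D (x - z) + U γ = (D - U Uᵀ) (x - z) = W (x - z)`,
so the optimality condition for `prox^D` at `p` is the one for `prox^W` at `x`. Hence the solutions
`γ` of the root-finding problem are precisely the vectors `-Uᵀ (x - z)` with `z = prox^W (x)`, and
the claim reduces to existence and uniqueness of that proximal point. Uniqueness is monotonicity of
the subdifferential. Existence is the direct method: a proper lower semicontinuous convex function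
decreases at most linearly, whereas the weighted norm grows quadratically.
-/

section ProperConvex

/-- Proper functions with values in `ℝ ∪ {+∞}`, encoded as `EReal`-valued functions that avoid `⊥`
and are not identically `⊤`. -/
structure IsProper {X : Type*} (h : X → EReal) : Prop where
  exists_ne_top : ∃ x, h x ≠ ⊤
  ne_bot : ∀ x, h x ≠ ⊥

namespace IsProper

variable {X : Type*} {h : X → EReal}

lemma eq_top_or_exists_eq_coe (hh : IsProper h) (x : X) : h x = ⊤ ∨ ∃ a : ℝ, h x = a :=
  or_iff_not_imp_left.2 fun hx => ⟨(h x).toReal, (EReal.coe_toReal hx (hh.ne_bot x)).symm⟩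

lemma exists_eq_coe (hh : IsProper h) : ∃ (x : X) (a : ℝ), h x = a :=
  hh.exists_ne_top.imp fun x hx => (hh.eq_top_or_exists_eq_coe x).resolve_left hx

lemma const_mul (hh : IsProper h) {c : ℝ} (hc : 0 < c) : IsProper fun x => (c : EReal) * h x where
  exists_ne_top := by
    obtain ⟨x, a, hx⟩ := hh.exists_eq_coe
    exact ⟨x, by simp only [hx, ← EReal.coe_mul]; exact EReal.coe_ne_top _⟩
  ne_bot x := by
    rcases hh.eq_top_or_exists_eq_coe x with hx | ⟨a, hx⟩
    · simp [hx, EReal.coe_mul_top_of_pos hc]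
    · simp only [hx, ← EReal.coe_mul]
      exact EReal.coe_ne_bot _

end IsProper

/-- Proper convex functions with values in `ℝ ∪ {+∞}`; see `IsProper` for the encoding. -/
structure IsProperConvex {E : Type*} [AddCommGroup E] [Module ℝ E] (h : E → EReal) : Prop
    extends IsProper h where
  convex : ∀ x y : E, ∀ a b : ℝ, 0 ≤ a → 0 ≤ b → a + b = 1 →
    h (a • x + b • y) ≤ (a : EReal) * h x + (b : EReal) * h y

namespace IsProperConvex

variable {E : Type*} [AddCommGroup E] [Module ℝ E] {h : E → EReal}

lemma apply_segment_le (hh : IsProperConvex h) {x y : E} {a b t : ℝ} (hx : h x = a) (hy : h y = b)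
    (ht₀ : 0 ≤ t) (ht₁ : t ≤ 1) :
    h ((1 - t) • x + t • y) ≤ (((1 - t) * a + t * b : ℝ) : EReal) := by
  have := hh.convex x y (1 - t) t (sub_nonneg.2 ht₁) ht₀ (by ring)
  rw [hx, hy] at this
  exact_mod_cast this

lemma const_mul (hh : IsProperConvex h) {c : ℝ} (hc : 0 < c) :
    IsProperConvex fun x => (c : EReal) * h x where
  toIsProper := hh.toIsProper.const_mul hc
  convex x y a b ha hb hab := by
    have hc₀ : (0 : EReal) ≤ c := by exact_mod_cast hc.le
    calc (c : EReal) * h (a • x + b • y) ≤ c * (a * h x + b * h y) :=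
          mul_le_mul_of_nonneg_left (hh.convex x y a b ha hb hab) hc₀
      _ = a * (c * h x) + b * (c * h y) := by
          rw [EReal.left_distrib_of_nonneg_of_ne_top hc₀ (EReal.coe_ne_top c), mul_left_comm,
            mul_left_comm (c : EReal)]

end IsProperConvex

end ProperConvex

section Prox

open Filter Topology

variable {E : Type*} [AddCommGroup E] [Module ℝ E] {h : E → EReal} {B : LinearMap.BilinForm ℝ E}
  {p z w : E}

/-- `φ` is a subgradient of `h` at `z`. For proper `h` this forces `h z` to be finite. -/
def IsSubgradient (h : E → EReal) (z : E) (φ : Module.Dual ℝ E) : Prop :=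
  ∀ u, h z + (φ (u - z) : EReal) ≤ h u

/-- `z` is a proximal point of `h` at `p` with respect to the bilinear form `B`, which plays the
role of the squared norm in the penalty. -/
def IsProx (h : E → EReal) (B : LinearMap.BilinForm ℝ E) (p z : E) : Prop :=
  ∀ u, h z + ((1 / 2 * B (z - p) (z - p) : ℝ) : EReal) ≤
    h u + ((1 / 2 * B (u - p) (u - p) : ℝ) : EReal)

lemma IsSubgradient.exists_eq_coe (hh : IsProper h) {φ : Module.Dual ℝ E}
    (hz : IsSubgradient h z φ) : ∃ a : ℝ, h z = a := by
  refine (hh.eq_top_or_exists_eq_coe z).resolve_left fun hz_top => ?_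
  obtain ⟨x, a, hx⟩ := hh.exists_eq_coe
  have := hz x
  rw [hz_top, hx, EReal.top_add_coe, top_le_iff] at this
  exact EReal.coe_ne_top _ this

lemma IsProx.exists_eq_coe (hh : IsProper h) (hz : IsProx h B p z) : ∃ a : ℝ, h z = a := by
  refine (hh.eq_top_or_exists_eq_coe z).resolve_left fun hz_top => ?_
  obtain ⟨x, a, hx⟩ := hh.exists_eq_coe
  have := hz x
  rw [hz_top, hx, EReal.top_add_coe, ← EReal.coe_add, top_le_iff] at this
  exact EReal.coe_ne_top _ this

lemma IsSubgradient.monotone (hh : IsProper h) {φ ψ : Module.Dual ℝ E}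
    (hz : IsSubgradient h z φ) (hw : IsSubgradient h w ψ) : φ (w - z) ≤ ψ (w - z) := by
  obtain ⟨a, ha⟩ := hz.exists_eq_coe hh
  obtain ⟨b, hb⟩ := hw.exists_eq_coe hh
  have hzw : a + φ (w - z) ≤ b := by
    have := hz w
    rw [ha, hb] at this
    exact_mod_cast this
  have hwz : b + ψ (z - w) ≤ a := by
    have := hw z
    rw [ha, hb] at this
    exact_mod_cast this
  rw [← neg_sub w z, map_neg] at hwz
  linarith

lemma bilin_add_smul_self (hB : B.IsSymm) (v w : E) (t : ℝ) :
    B (v + t • w) (v + t • w) = B v v + 2 * t * B v w + t ^ 2 * B w w := by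
  have := hB.eq w v
  simp only [map_add, map_smul, LinearMap.add_apply, LinearMap.smul_apply, smul_eq_mul]
    at this ⊢
  rw [this]
  ring

lemma nonneg_of_forall_Ioc_add_mul_nonneg {s c : ℝ}
    (hs : ∀ t ∈ Set.Ioc (0 : ℝ) 1, 0 ≤ s + t * c) : 0 ≤ s := by
  have hlim : Tendsto (fun t : ℝ => s + t * c) (𝓝[>] 0) (𝓝 s) := by
    have hcont : Continuous fun t : ℝ => s + t * c := by fun_prop
    simpa using (hcont.tendsto 0).mono_left nhdsWithin_le_nhds
  refine ge_of_tendsto hlim ?_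
  filter_upwards [Ioc_mem_nhdsGT one_pos] using hs

lemma IsProx.isSubgradient (hh : IsProperConvex h) (hB : B.IsSymm) (hz : IsProx h B p z) :
    IsSubgradient h z (B (p - z)) := by
  intro u
  obtain ⟨a, ha⟩ := hz.exists_eq_coe hh.toIsProper
  rcases hh.eq_top_or_exists_eq_coe u with hu | ⟨b, hb⟩
  · simp [hu]
  -- Compare `z` with the points `z + t (u - z)` and let `t` tend to `0`.
  have hsegment : ∀ t ∈ Set.Ioc (0 : ℝ) 1,
      0 ≤ (b - a + B (z - p) (u - z)) + t * (1 / 2 * B (u - z) (u - z)) := by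
    rintro t ⟨ht₀, ht₁⟩
    have hprox := (hz ((1 - t) • z + t • u)).trans
      (add_le_add_left (hh.apply_segment_le ha hb ht₀.le ht₁) _)
    rw [ha, show (1 - t) • z + t • u - p = (z - p) + t • (u - z) by module,
      bilin_add_smul_self hB] at hprox
    norm_cast at hprox
    refine nonneg_of_mul_nonneg_right ?_ ht₀
    linarith
  have hlimit := nonneg_of_forall_Ioc_add_mul_nonneg hsegment
  have hneg : B (p - z) (u - z) = -B (z - p) (u - z) := by
    rw [← neg_sub z p, map_neg, LinearMap.neg_apply]
  rw [ha, hb]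
  norm_cast
  linarith

lemma IsSubgradient.isProx (hB : B.IsPosSemidef) (hz : IsSubgradient h z (B (p - z))) :
    IsProx h B p z := by
  intro u
  have hexpand : 1 / 2 * B (z - p) (z - p) ≤
      B (p - z) (u - z) + 1 / 2 * B (u - p) (u - p) := by
    have hsq := bilin_add_smul_self hB.isSymm (z - p) (u - z) 1
    rw [show z - p + (1 : ℝ) • (u - z) = u - p by module] at hsq
    rw [← neg_sub z p, map_neg, LinearMap.neg_apply]
    linarith [hB.nonneg (u - z)]
  calc h z + ((1 / 2 * B (z - p) (z - p) : ℝ) : EReal)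
      ≤ h z + ((B (p - z) (u - z) + 1 / 2 * B (u - p) (u - p) : ℝ) : EReal) := by gcongr
    _ = h z + (B (p - z) (u - z) : EReal) + ((1 / 2 * B (u - p) (u - p) : ℝ) : EReal) := by
        rw [EReal.coe_add, add_assoc]
    _ ≤ h u + ((1 / 2 * B (u - p) (u - p) : ℝ) : EReal) := by gcongr; exact hz u

lemma isProx_iff_isSubgradient (hh : IsProperConvex h) (hB : B.IsPosSemidef) :
    IsProx h B p z ↔ IsSubgradient h z (B (p - z)) :=
  ⟨fun hz => hz.isSubgradient hh hB.isSymm, fun hz => hz.isProx hB⟩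

lemma IsProx.unique (hh : IsProperConvex h) (hB : B.IsSymm) (hpos : B.toQuadraticMap.PosDef)
    (hz : IsProx h B p z) (hw : IsProx h B p w) : z = w := by
  have hmono := (hz.isSubgradient hh hB).monotone hh.toIsProper (hw.isSubgradient hh hB)
  have hsq : B (w - z) (w - z) = B (p - z) (w - z) - B (p - w) (w - z) := by
    rw [← LinearMap.sub_apply, ← map_sub, sub_sub_sub_cancel_left]
  by_contra hne
  have : 0 < B (w - z) (w - z) := hpos _ (sub_ne_zero.2 (Ne.symm hne))
  linarith

end Prox

section Existence

open Filter

lemma exists_forall_le_of_lowerSemicontinuous {X α : Type*} [TopologicalSpace X] [LinearOrder α]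
    {f : X → α} (hf : LowerSemicontinuous f) (x₀ : X)
    (hx₀ : ∀ᶠ x in cocompact X, f x₀ ≤ f x) : ∃ x, ∀ y, f x ≤ f y := by
  obtain ⟨K, hK, hKle⟩ := mem_cocompact.1 hx₀
  obtain ⟨x, -, hx⟩ := (hf.lowerSemicontinuousOn _).exists_isMinOn (Set.insert_nonempty x₀ K)
    (hK.insert x₀)
  refine ⟨x, fun y => ?_⟩
  by_cases hy : y ∈ K
  · exact hx (Set.mem_insert_of_mem x₀ hy)
  · exact le_trans (hx (Set.mem_insert x₀ K)) (hKle hy)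

variable {E : Type*} [NormedAddCommGroup E] [NormedSpace ℝ E] {h : E → EReal}

-- Convexity along the ray from `x` through `u` propagates the bound on the ball outwards.
lemma IsProperConvex.sub_mul_norm_sub_le (hh : IsProperConvex h) {x : E} {a m : ℝ} (hx : h x = a)
    (hm : ∀ u ∈ Metric.closedBall x 1, (m : EReal) ≤ h u) (u : E) :
    ((m - (a - m) * ‖u - x‖ : ℝ) : EReal) ≤ h u := by
  have hma : m ≤ a := by
    have := hm x (Metric.mem_closedBall_self zero_le_one)
    rw [hx] at this
    exact_mod_cast this
  rcases le_total ‖u - x‖ 1 with hu | hu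
  · have hmu : (m : EReal) ≤ h u := hm u (by rwa [Metric.mem_closedBall, dist_eq_norm])
    refine le_trans ?_ hmu
    exact_mod_cast sub_le_self m (mul_nonneg (sub_nonneg.2 hma) (norm_nonneg _))
  rcases hh.eq_top_or_exists_eq_coe u with hu_top | ⟨b, hb⟩
  · simp [hu_top]
  set R := ‖u - x‖
  have hR : 0 < R := one_pos.trans_le hu
  have hmem : (1 - R⁻¹) • x + R⁻¹ • u ∈ Metric.closedBall x 1 := by
    rw [Metric.mem_closedBall, dist_eq_norm,
      show (1 - R⁻¹) • x + R⁻¹ • u - x = R⁻¹ • (u - x) by module, norm_smul,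
      Real.norm_of_nonneg (inv_nonneg.2 hR.le), inv_mul_cancel₀ hR.ne']
  have hray : m ≤ (1 - R⁻¹) * a + R⁻¹ * b := by
    exact_mod_cast (hm _ hmem).trans
      (hh.apply_segment_le hx hb (inv_nonneg.2 hR.le) (inv_le_one_of_one_le₀ hu))
  have hscaled : R * m ≤ (R - 1) * a + b := by
    calc R * m ≤ R * ((1 - R⁻¹) * a + R⁻¹ * b) := by gcongr
      _ = (R - 1) * a + b := by field_simp
  rw [hb]
  norm_cast
  linarith

lemma IsProperConvex.exists_sub_mul_norm_sub_le [ProperSpace E] (hh : IsProperConvex h)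
    (hlsc : LowerSemicontinuous h) (p : E) :
    ∃ m C : ℝ, ∀ u, ((m - C * ‖u - p‖ : ℝ) : EReal) ≤ h u := by
  obtain ⟨x, a, hx⟩ := hh.exists_eq_coe
  have hxmem : x ∈ Metric.closedBall x 1 := Metric.mem_closedBall_self zero_le_one
  obtain ⟨v, -, hv⟩ := (hlsc.lowerSemicontinuousOn _).exists_isMinOn ⟨x, hxmem⟩
    (isCompact_closedBall x 1)
  have hva : h v ≤ a := hx ▸ hv hxmem
  obtain ⟨m, hm⟩ : ∃ m : ℝ, h v = m := (hh.eq_top_or_exists_eq_coe v).resolve_left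
    (ne_top_of_le_ne_top (EReal.coe_ne_top a) hva)
  have hma : m ≤ a := by exact_mod_cast hm ▸ hva
  refine ⟨m - (a - m) * ‖p - x‖, a - m, fun u => ?_⟩
  refine le_trans ?_ (hh.sub_mul_norm_sub_le hx (fun y hy => hm ▸ hv hy) u)
  have htri := mul_le_mul_of_nonneg_left (norm_sub_le_norm_sub_add_norm_sub u p x)
    (sub_nonneg.2 hma)
  norm_cast
  linarith

variable [FiniteDimensional ℝ E] {B : LinearMap.BilinForm ℝ E}

lemma continuous_bilin_self (B : LinearMap.BilinForm ℝ E) : Continuous fun v => B v v :=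
  B.toContinuousBilinearMap.continuous.clm_apply continuous_id

lemma exists_pos_mul_norm_sq_le_bilin_self (hB : B.toQuadraticMap.PosDef) :
    ∃ c : ℝ, 0 < c ∧ ∀ v, c * ‖v‖ ^ 2 ≤ B v v := by
  have := FiniteDimensional.proper ℝ E
  obtain ⟨c, hc, hsphere⟩ := (isCompact_sphere (0 : E) 1).exists_forall_le'
    (continuous_bilin_self B).continuousOn
    fun v hv => hB v (ne_zero_of_mem_unit_sphere ⟨v, hv⟩)
  refine ⟨c, hc, fun v => ?_⟩
  rcases eq_or_ne v 0 with rfl | hv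
  · simp
  have hv' : ‖v‖ ≠ 0 := norm_ne_zero_iff.2 hv
  have hunit : ‖v‖⁻¹ • v ∈ Metric.sphere (0 : E) 1 := by simp [norm_smul, hv']
  calc c * ‖v‖ ^ 2 ≤ B (‖v‖⁻¹ • v) (‖v‖⁻¹ • v) * ‖v‖ ^ 2 := by gcongr; exact hsphere _ hunit
    _ = B v v := by
        simp only [map_smul, LinearMap.smul_apply, smul_eq_mul]
        field_simp

lemma tendsto_quadratic_atTop {c : ℝ} (hc : 0 < c) (m C : ℝ) :
    Tendsto (fun t : ℝ => m - C * t + c * t ^ 2) atTop atTop := by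
  have hlinear : Tendsto (fun t : ℝ => c * t - C) atTop atTop :=
    tendsto_atTop_add_const_right _ _ (tendsto_id.const_mul_atTop hc)
  refine (tendsto_atTop_add_const_left _ m
    (tendsto_id.atTop_mul_atTop₀ hlinear)).congr fun t => ?_
  simp only [id]
  ring

lemma exists_isProx (hh : IsProperConvex h) (hlsc : LowerSemicontinuous h)
    (hB : B.toQuadraticMap.PosDef) (p : E) : ∃ z, IsProx h B p z := by
  have := FiniteDimensional.proper ℝ E
  obtain ⟨x, a, hx⟩ := hh.exists_eq_coe
  obtain ⟨m, C, hlinear⟩ := hh.exists_sub_mul_norm_sub_le hlsc p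
  obtain ⟨c, hc, hquadratic⟩ := exists_pos_mul_norm_sq_le_bilin_self hB
  have hlsc_objective : LowerSemicontinuous fun u =>
      h u + ((1 / 2 * B (u - p) (u - p) : ℝ) : EReal) := by
    have hcont : Continuous fun u => 1 / 2 * B (u - p) (u - p) :=
      continuous_const.mul ((continuous_bilin_self B).comp (continuous_sub_right p))
    exact hlsc.add' (continuous_coe_real_ereal.comp hcont).lowerSemicontinuous fun u =>
      EReal.continuousAt_add (Or.inr (EReal.coe_ne_bot _)) (Or.inr (EReal.coe_ne_top _))
  have hgrowth : Tendsto (fun u => m - C * ‖u - p‖ + c / 2 * ‖u - p‖ ^ 2)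
      (cocompact E) atTop := by
    simpa only [dist_eq_norm, Function.comp_def] using
      (tendsto_quadratic_atTop (half_pos hc) m C).comp (tendsto_dist_right_cocompact_atTop p)
  refine exists_forall_le_of_lowerSemicontinuous hlsc_objective x ?_
  filter_upwards [hgrowth.eventually_ge_atTop (a + 1 / 2 * B (x - p) (x - p))] with u hu
  calc h x + ((1 / 2 * B (x - p) (x - p) : ℝ) : EReal)
      ≤ ((m - C * ‖u - p‖ + c / 2 * ‖u - p‖ ^ 2 : ℝ) : EReal) := by
        rw [hx]
        exact_mod_cast hu
    _ ≤ ((m - C * ‖u - p‖ : ℝ) : EReal) + ((1 / 2 * B (u - p) (u - p) : ℝ) : EReal) := by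
        norm_cast
        linarith [hquadratic (u - p)]
    _ ≤ h u + ((1 / 2 * B (u - p) (u - p) : ℝ) : EReal) := by
        gcongr
        exact hlinear u

end Existence

section WeightedProx

open Filter

lemma lowerSemicontinuous_coe_mul {X : Type*} [TopologicalSpace X] {h : X → EReal}
    (hlsc : LowerSemicontinuous h) {c : ℝ} (hc : 0 ≤ c) :
    LowerSemicontinuous fun x => (c : EReal) * h x := by
  have hcont : Continuous fun y : EReal => (c : EReal) * y :=
    continuous_iff_continuousAt.2 fun y => EReal.Tendsto.const_mul tendsto_id
      (Or.inl (EReal.coe_ne_bot c)) (Or.inl (EReal.coe_ne_top c))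
  exact hcont.comp_lowerSemicontinuous hlsc fun y y' hy =>
    mul_le_mul_of_nonneg_left hy (by exact_mod_cast hc)

lemma posDef_toBilin' {n : Type*} [Fintype n] [DecidableEq n] {M : Matrix n n ℝ} (hM : M.PosDef) :
    M.toBilin'.toQuadraticMap.PosDef := hM.toQuadraticForm'

lemma isPosSemidef_toBilin' {n : Type*} [Fintype n] [DecidableEq n] {M : Matrix n n ℝ}
    (hM : M.PosSemidef) : M.toBilin'.IsPosSemidef where
  eq := (isSymm_toBilin'_iff_isSymm.2 (by simpa using hM.isHermitian)).eq
  nonneg v := by simpa [toBilin'_apply'] using hM.dotProduct_mulVec_nonneg v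

lemma toBilin'_eq_dotProductBilin {n : Type*} [Fintype n] [DecidableEq n] {M : Matrix n n ℝ}
    (hM : M.IsSymm) (v : n → ℝ) : M.toBilin' v = dotProductBilin ℝ ℝ (M *ᵥ v) := by
  refine LinearMap.ext fun w => ?_
  rw [toBilin'_apply', dotProductBilin_apply_apply, dotProduct_mulVec, ← mulVec_transpose, hM.eq]

lemma mulVec_add_inv_mulVec_sub {n k : Type*} [Fintype n] [DecidableEq n] [Fintype k]
    {R : Type*} [CommRing R] {D : Matrix n n R} (hD : IsUnit D.det) {U : Matrix n k R}
    {V : Matrix k n R} {x z : n → R} {γ : k → R} (hγ : V *ᵥ (x - z) + γ = 0) :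
    D *ᵥ (x + D⁻¹ *ᵥ (U *ᵥ γ) - z) = (D - U * V) *ᵥ (x - z) := by
  rw [add_sub_right_comm, mulVec_add, mulVec_mulVec _ D, mul_nonsing_inv D hD, one_mulVec,
    eq_neg_of_add_eq_zero_right hγ, mulVec_neg, mulVec_mulVec, ← sub_eq_add_neg, ← sub_mulVec]

variable {N : ℕ} {h : (Fin N → ℝ) → EReal} {lam : ℝ} {W : Matrix (Fin N) (Fin N) ℝ}
  {x z : Fin N → ℝ}

lemma isWProx_iff_isProx :
    IsWProx h lam W x z ↔ IsProx (fun u => (lam : EReal) * h u) W.toBilin' x z := by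
  simp only [IsWProx, IsProx, toBilin'_apply']

lemma isWProx_iff_isSubgradient (hh : IsProperConvex h) (hlam : 0 < lam) (hW : W.PosSemidef) :
    IsWProx h lam W x z ↔
      IsSubgradient (fun u => (lam : EReal) * h u) z (dotProductBilin ℝ ℝ (W *ᵥ (x - z))) := by
  have hWsymm : W.IsSymm := by simpa using hW.isHermitian
  rw [isWProx_iff_isProx, isProx_iff_isSubgradient (hh.const_mul hlam) (isPosSemidef_toBilin' hW),
    toBilin'_eq_dotProductBilin hWsymm]

lemma IsWProx.unique {w : Fin N → ℝ} (hh : IsProperConvex h) (hlam : 0 < lam) (hW : W.PosDef)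
    (hz : IsWProx h lam W x z) (hw : IsWProx h lam W x w) : z = w :=
  IsProx.unique (hh.const_mul hlam) (isPosSemidef_toBilin' hW.posSemidef).isSymm
    (posDef_toBilin' hW) (isWProx_iff_isProx.1 hz) (isWProx_iff_isProx.1 hw)

lemma exists_isWProx (hh : IsProperConvex h) (hlsc : LowerSemicontinuous h) (hlam : 0 < lam)
    (hW : W.PosDef) (x : Fin N → ℝ) : ∃ z, IsWProx h lam W x z := by
  simp only [isWProx_iff_isProx]
  exact exists_isProx (hh.const_mul hlam) (lowerSemicontinuous_coe_mul hlsc hlam.le)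
    (posDef_toBilin' hW) x

lemma isWProx_add_inv_mulVec_iff {k : Type*} [Fintype k] {D : Matrix (Fin N) (Fin N) ℝ}
    {U : Matrix (Fin N) k ℝ} {γ : k → ℝ} (hh : IsProperConvex h) (hlam : 0 < lam)
    (hD : D.PosDef) (hW : (D - U * Uᵀ).PosSemidef) (hγ : Uᵀ *ᵥ (x - z) + γ = 0) :
    IsWProx h lam D (x + D⁻¹ *ᵥ (U *ᵥ γ)) z ↔ IsWProx h lam (D - U * Uᵀ) x z := by
  rw [isWProx_iff_isSubgradient hh hlam hD.posSemidef, isWProx_iff_isSubgradient hh hlam hW,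
    mulVec_add_inv_mulVec_sub hD.det_pos.ne'.isUnit hγ]

end WeightedProx

/-- for `W = D − U Uᵀ` symmetric positive definite, with `D` symmetric positive definite, there is a unique
`γ*` with `Uᵀ (x − prox_{λh}^D (x + D⁻¹ U γ*)) + γ* = 0`, and
`prox_{λh}^W (x) = prox_{λh}^D (x + D⁻¹ U γ*)`. -/
theorem stmt1 {N r : ℕ} (h : (Fin N → ℝ) → EReal)
    (hproper : ∃ x, h x ≠ ⊤) (hnobot : ∀ x, h x ≠ ⊥)
    (hlsc : LowerSemicontinuous h)
    (hconv : ∀ x y : Fin N → ℝ, ∀ a b : ℝ, 0 ≤ a → 0 ≤ b → a + b = 1 →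
      h (a • x + b • y) ≤ (a : EReal) * h x + (b : EReal) * h y)
    (lam : ℝ) (hlam : 0 < lam)
    (D : Matrix (Fin N) (Fin N) ℝ) (hDsymm : D.IsSymm) (hDpos : D.PosDef)
    (U : Matrix (Fin N) (Fin r) ℝ)
    (W : Matrix (Fin N) (Fin N) ℝ) (hW : W = D - U * Uᵀ) (hWpos : W.PosDef)
    (x : Fin N → ℝ) :
    (∃! γ : Fin r → ℝ, ∃ z : Fin N → ℝ,
        IsWProx h lam D (x + D⁻¹.mulVec (U.mulVec γ)) z ∧
          Uᵀ.mulVec (x - z) + γ = 0) ∧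
    (∀ γ : Fin r → ℝ, ∀ z : Fin N → ℝ,
        IsWProx h lam D (x + D⁻¹.mulVec (U.mulVec γ)) z →
          Uᵀ.mulVec (x - z) + γ = 0 → IsWProx h lam W x z) := by
  subst hW
  have hh : IsProperConvex h := ⟨⟨hproper, hnobot⟩, hconv⟩
  have hshift {γ : Fin r → ℝ} {z : Fin N → ℝ} (hγ : Uᵀ *ᵥ (x - z) + γ = 0) :=
    isWProx_add_inv_mulVec_iff hh hlam hDpos hWpos.posSemidef hγ
  refine ⟨?_, fun γ z hz hγ => (hshift hγ).1 hz⟩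
  obtain ⟨z, hz⟩ := exists_isWProx hh hlsc hlam hWpos x
  have hγ : Uᵀ *ᵥ (x - z) + -Uᵀ *ᵥ (x - z) = 0 := by rw [neg_mulVec, add_neg_cancel]
  refine ⟨-Uᵀ *ᵥ (x - z), ⟨z, (hshift hγ).2 hz, hγ⟩, ?_⟩
  rintro γ ⟨w, hw, hwγ⟩
  obtain rfl : z = w := hz.unique hh hlam hWpos ((hshift hwγ).1 hw)
  exact add_left_cancel (hwγ.trans hγ.symm)
end

section
/- Let C ⊆ ℝ^N be nonempty, closed and convex, let P ∈ ℝ^{N×N} be symmetric positive definite with P − I_N positive semidefinite (so the smallest eigenvalue of P equals 1, as for P = I + Ū Ūᵀ), let L ∈ ℝ^{L'×N}, s ∈ ℝ^N, and λ̄ > 0. For Q ∈ ℝ^{L'} define m(Q) = s − λ̄ P^{-1} Lᵀ Q and let x*(Q) be the P-weighted projection of m(Q) onto C. Then the map Q ↦ −2 λ̄ L x*(Q) is Lipschitz continuous with Lipschitz constant 2 λ̄² ‖L‖², where ‖L‖ denotes the spectral (operator ℓ₂) norm of L. -/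
open Matrix

/-!
Write `d = x*(Q₁) - x*(Q₂)` and `q = Q₁ - Q₂`. Adding the first-order optimality conditions of the
two projections gives firm nonexpansiveness, `dᵀ P d ≤ dᵀ P (m(Q₁) - m(Q₂)) = -λ̄ ⟪L d, q⟫`. If
`P ≥ μ I`, then `‖L d‖² ≤ (‖L‖² / μ) dᵀ P d`, so Cauchy–Schwarz yields
`‖L d‖² ≤ (‖L‖² / μ) |λ̄| ‖L d‖ ‖q‖`, and one factor `‖L d‖` cancels.
-/

open Filter Topology

section Projection

variable {E : Type*} [AddCommGroup E] [Module ℝ E]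

/-- `y` is a projection of `c` onto `C` with respect to the bilinear form `B`, i.e. a minimizer over
`x ∈ C` of `B (x - c) (x - c)`. As `B` is not assumed positive definite, `y` need not be unique. -/
structure IsFormProjection (B : LinearMap.BilinForm ℝ E) (C : Set E) (c y : E) : Prop where
  mem : y ∈ C
  le : ∀ x ∈ C, B (y - c) (y - c) ≤ B (x - c) (x - c)

namespace IsFormProjection

variable {B : LinearMap.BilinForm ℝ E} {C : Set E}

theorem nonneg_apply_sub (hB : B.IsSymm) (hC : Convex ℝ C) {c x y : E}
    (hy : IsFormProjection B C c y) (hx : x ∈ C) : 0 ≤ B (x - y) (y - c) := by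
  have expand (t : ℝ) : B (y + t • (x - y) - c) (y + t • (x - y) - c) =
      B (y - c) (y - c) + t * (2 * B (x - y) (y - c) + t * B (x - y) (x - y)) := by
    rw [add_sub_right_comm]
    simp only [map_add, map_smul, LinearMap.add_apply, LinearMap.smul_apply, smul_eq_mul,
      hB.eq (y - c) (x - y)]
    ring
  have slope_nonneg : ∀ᶠ t : ℝ in 𝓝[>] 0, 0 ≤ 2 * B (x - y) (y - c) + t * B (x - y) (x - y) := by
    filter_upwards [Ioc_mem_nhdsGT one_pos] with t ht
    have hmin := hy.le _ (hC.add_smul_sub_mem hy.mem hx ⟨ht.1.le, ht.2⟩)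
    rw [expand, le_add_iff_nonneg_right] at hmin
    exact nonneg_of_mul_nonneg_right hmin ht.1
  have slope_tendsto : Tendsto (fun t : ℝ ↦ 2 * B (x - y) (y - c) + t * B (x - y) (x - y))
      (𝓝[>] 0) (𝓝 (2 * B (x - y) (y - c))) :=
    tendsto_nhdsWithin_of_tendsto_nhds <| Continuous.tendsto' (by fun_prop) _ _ (by simp)
  linarith [ge_of_tendsto slope_tendsto slope_nonneg]

theorem apply_sub_self_le (hB : B.IsSymm) (hC : Convex ℝ C) {c₁ c₂ y₁ y₂ : E}
    (h₁ : IsFormProjection B C c₁ y₁) (h₂ : IsFormProjection B C c₂ y₂) :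
    B (y₁ - y₂) (y₁ - y₂) ≤ B (y₁ - y₂) (c₁ - c₂) := by
  have opt₁ := h₁.nonneg_apply_sub hB hC h₂.mem
  have opt₂ := h₂.nonneg_apply_sub hB hC h₁.mem
  simp only [map_sub, LinearMap.sub_apply] at opt₁ opt₂ ⊢
  linarith

theorem norm_map_sub_le {F : Type*} [SeminormedAddCommGroup F] [InnerProductSpace ℝ F]
    (hB : B.IsSymm) (hC : Convex ℝ C) {T : E →ₗ[ℝ] F} {κ : ℝ} (hκ : 0 ≤ κ)
    (hT : ∀ x, ‖T x‖ ^ 2 ≤ κ * B x x) {c₁ c₂ y₁ y₂ : E} {q : F}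
    (hc : ∀ x, B x (c₁ - c₂) = inner ℝ (T x) q)
    (h₁ : IsFormProjection B C c₁ y₁) (h₂ : IsFormProjection B C c₂ y₂) :
    ‖T (y₁ - y₂)‖ ≤ κ * ‖q‖ := by
  have norm_sq_le : ‖T (y₁ - y₂)‖ * ‖T (y₁ - y₂)‖ ≤ ‖T (y₁ - y₂)‖ * (κ * ‖q‖) := calc
    _ ≤ κ * B (y₁ - y₂) (y₁ - y₂) := by rw [← sq]; exact hT _
    _ ≤ κ * inner ℝ (T (y₁ - y₂)) q := by
      rw [← hc]; gcongr; exact h₁.apply_sub_self_le hB hC h₂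
    _ ≤ κ * (‖T (y₁ - y₂)‖ * ‖q‖) := by gcongr; exact real_inner_le_norm _ _
    _ = ‖T (y₁ - y₂)‖ * (κ * ‖q‖) := by ring
  rcases (norm_nonneg (T (y₁ - y₂))).eq_or_lt with h | h
  · rw [← h]; positivity
  · exact le_of_mul_le_mul_left norm_sq_le h

end IsFormProjection

end Projection

section Matrix

theorem posDef_of_posSemidef_sub_smul_one {n : Type*} [DecidableEq n] {P : Matrix n n ℝ} {μ : ℝ}
    (hμ : 0 < μ) (hP : (P - μ • 1).PosSemidef) : P.PosDef := by
  simpa using (PosDef.one.smul hμ).add_posSemidef hP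

variable {n k : Type*} [Fintype n] [DecidableEq n] [Fintype k] {P : Matrix n n ℝ} {μ : ℝ}

theorem mul_norm_toLp_sq_le_of_posSemidef_sub_smul_one (hP : (P - μ • 1).PosSemidef) (x : n → ℝ) :
    μ * ‖WithLp.toLp 2 x‖ ^ 2 ≤ x ⬝ᵥ P *ᵥ x := by
  have h := hP.dotProduct_mulVec_nonneg x
  simp only [star_trivial, sub_mulVec, smul_mulVec, one_mulVec, dotProduct_sub, dotProduct_smul,
    smul_eq_mul, sub_nonneg] at h
  simpa only [EuclideanSpace.real_norm_sq_eq, dotProduct, ← sq] using h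

theorem norm_toEuclideanLin_sq_le_of_posSemidef_sub_smul_one (hμ : 0 < μ)
    (hP : (P - μ • 1).PosSemidef) (L : Matrix k n ℝ) (x : n → ℝ) :
    ‖L.toEuclideanLin (WithLp.toLp 2 x)‖ ^ 2 ≤
      ‖LinearMap.toContinuousLinearMap L.toEuclideanLin‖ ^ 2 / μ * (x ⬝ᵥ P *ᵥ x) := by
  set T := LinearMap.toContinuousLinearMap L.toEuclideanLin
  calc ‖T (WithLp.toLp 2 x)‖ ^ 2 ≤ (‖T‖ * ‖WithLp.toLp 2 x‖) ^ 2 := by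
        gcongr; exact T.le_opNorm _
    _ = ‖T‖ ^ 2 / μ * (μ * ‖WithLp.toLp 2 x‖ ^ 2) := by field_simp
    _ ≤ ‖T‖ ^ 2 / μ * (x ⬝ᵥ P *ᵥ x) := by
        gcongr; exact mul_norm_toLp_sq_le_of_posSemidef_sub_smul_one hP x

theorem dotProduct_mulVec_inv_mulVec_transpose_mulVec (hP : IsUnit P.det) (L : Matrix k n ℝ)
    (x : n → ℝ) (q : EuclideanSpace ℝ k) :
    x ⬝ᵥ P *ᵥ P⁻¹ *ᵥ Lᵀ *ᵥ q.ofLp = inner ℝ (L.toEuclideanLin (WithLp.toLp 2 x)) q := by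
  rw [mulVec_mulVec, mul_nonsing_inv _ hP, one_mulVec, EuclideanSpace.inner_eq_star_dotProduct,
    mulVec_transpose, dotProduct_comm, ← dotProduct_mulVec]
  simp

theorem stmt13_general {C : Set (n → ℝ)} (hC : Convex ℝ C) (hμ : 0 < μ)
    (hP : (P - μ • 1).PosSemidef) (L : Matrix k n ℝ) (s : n → ℝ) (lb : ℝ)
    {m : EuclideanSpace ℝ k → n → ℝ} (hm : ∀ Q, m Q = s - lb • P⁻¹ *ᵥ Lᵀ *ᵥ Q.ofLp)
    {xs : EuclideanSpace ℝ k → n → ℝ}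
    (hxs : ∀ Q, IsFormProjection (toBilin' P) C (m Q) (xs Q)) (Q₁ Q₂ : EuclideanSpace ℝ k) :
    ‖WithLp.toLp 2 (-(2 * lb) • L *ᵥ xs Q₁) - WithLp.toLp 2 (-(2 * lb) • L *ᵥ xs Q₂)‖ ≤
      2 * lb ^ 2 * (‖LinearMap.toContinuousLinearMap L.toEuclideanLin‖ ^ 2 / μ) * ‖Q₁ - Q₂‖ := by
  have hPpos : P.PosDef := posDef_of_posSemidef_sub_smul_one hμ hP
  have hPsymm : (toBilin' P).IsSymm := isSymm_toBilin'_iff_isSymm.2 hPpos.isHermitian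
  set κ := ‖LinearMap.toContinuousLinearMap L.toEuclideanLin‖ ^ 2 / μ
  let T : (n → ℝ) →ₗ[ℝ] EuclideanSpace ℝ k :=
    L.toEuclideanLin ∘ₗ (WithLp.linearEquiv 2 ℝ (n → ℝ)).symm.toLinearMap
  have hTsq (x : n → ℝ) : ‖T x‖ ^ 2 ≤ κ * toBilin' P x x := by
    rw [toBilin'_apply']
    exact norm_toEuclideanLin_sq_le_of_posSemidef_sub_smul_one hμ hP L x
  have hmT (x : n → ℝ) : toBilin' P x (m Q₁ - m Q₂) = inner ℝ (T x) (lb • (Q₂ - Q₁)) := by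
    have hsub : m Q₁ - m Q₂ = P⁻¹ *ᵥ Lᵀ *ᵥ (lb • (Q₂ - Q₁)).ofLp := by
      simp only [hm, WithLp.ofLp_smul, WithLp.ofLp_sub, mulVec_smul, mulVec_sub, smul_sub]
      abel
    rw [toBilin'_apply', hsub]
    exact dotProduct_mulVec_inv_mulVec_transpose_mulVec hPpos.det_pos.ne'.isUnit L x _
  have hnorm : ‖T (xs Q₁ - xs Q₂)‖ ≤ κ * ‖lb • (Q₂ - Q₁)‖ :=
    (hxs Q₁).norm_map_sub_le hPsymm hC (by positivity) hTsq hmT (hxs Q₂)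
  calc ‖WithLp.toLp 2 (-(2 * lb) • L *ᵥ xs Q₁) - WithLp.toLp 2 (-(2 * lb) • L *ᵥ xs Q₂)‖
      = ‖-(2 * lb) • T (xs Q₁ - xs Q₂)‖ := by rw [map_sub, smul_sub]; rfl
    _ = 2 * |lb| * ‖T (xs Q₁ - xs Q₂)‖ := by simp [norm_smul]
    _ ≤ 2 * |lb| * (κ * (|lb| * ‖Q₁ - Q₂‖)) := by
        rw [norm_smul, Real.norm_eq_abs, norm_sub_rev] at hnorm; gcongr
    _ = 2 * lb ^ 2 * κ * ‖Q₁ - Q₂‖ := by rw [← sq_abs lb]; ring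

end Matrix

/-- Lipschitz continuity of the dual gradient. With `P` symmetric positive
definite and `P − I` positive semidefinite, `m(Q) = s − λ̄ P⁻¹ Lᵀ Q`, and `x*(Q)` the
`P`-weighted projection of `m(Q)` onto the nonempty closed convex set `C`, the map
`Q ↦ −2 λ̄ L x*(Q)` is Lipschitz with constant `2 λ̄² ‖L‖²`, where `‖L‖` is the spectral
norm (Euclidean operator norm) of `L`, and distances are Euclidean. -/
theorem stmt13 {N K : ℕ} (C : Set (Fin N → ℝ)) (hCne : C.Nonempty) (hCcl : IsClosed C)
    (hCco : Convex ℝ C)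
    (P : Matrix (Fin N) (Fin N) ℝ) (hPsymm : P.IsSymm) (hPpos : P.PosDef)
    (hPI : (P - 1).PosSemidef)
    (L : Matrix (Fin K) (Fin N) ℝ) (s : Fin N → ℝ) (lb : ℝ) (hlb : 0 < lb)
    (m : EuclideanSpace ℝ (Fin K) → Fin N → ℝ)
    (hm : ∀ Q, m Q = s - lb • P⁻¹.mulVec (Lᵀ.mulVec (WithLp.equiv 2 (Fin K → ℝ) Q)))
    (xs : EuclideanSpace ℝ (Fin K) → Fin N → ℝ)
    (hxs : ∀ Q, xs Q ∈ C ∧ ∀ x ∈ C,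
      (xs Q - m Q) ⬝ᵥ P.mulVec (xs Q - m Q) ≤ (x - m Q) ⬝ᵥ P.mulVec (x - m Q)) :
    ∀ Q₁ Q₂ : EuclideanSpace ℝ (Fin K),
      ‖(WithLp.equiv 2 (Fin K → ℝ)).symm ((-(2 * lb)) • L.mulVec (xs Q₁)) -
          (WithLp.equiv 2 (Fin K → ℝ)).symm ((-(2 * lb)) • L.mulVec (xs Q₂))‖ ≤
        2 * lb ^ 2 * ‖LinearMap.toContinuousLinearMap (Matrix.toEuclideanLin L)‖ ^ 2 *
          ‖Q₁ - Q₂‖ := by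
  have hproj (Q) : IsFormProjection (toBilin' P) C (m Q) (xs Q) :=
    ⟨(hxs Q).1, by simpa only [toBilin'_apply'] using (hxs Q).2⟩
  simpa using stmt13_general hCco one_pos (by simpa using hPI) L s lb hm hproj
end
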